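/- Let p be a prime, q = 1/p, let k ≥ 0 be an integer, and let x be a real number with |x| < 1. Then the series ∑_{μ=1}^∞ P(2k+1, p^μ)·x^μ converges and equals (x/(1−x)) · ((1−q·x²)/(1−q·x)) · ∏_{j=0}^{k} (1−q^{2j+1})/(1−q^{2j+1}·x²). -/

import Mathlib

/-- Number of symmetric `n × n` matrices over `ZMod m` with nonzero determinant. -/
noncomputable def Nsym (n m : ℕ) : ℕ :=
  Nat.card {A : Matrix (Fin n) (Fin n) (ZMod m) // A.IsSymm ∧ A.det ≠ 0}

/-- Proportion of symmetric `n × n` matrices over `ZMod m` with nonzero determinant. -/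
noncomputable def Psym (n m : ℕ) : ℝ :=
  (Nsym n m : ℝ) / (m : ℝ) ^ (n * (n + 1) / 2)

open scoped BigOperators Matrix

section Averages

variable {G H : Type*} [AddCommGroup G] [Fintype G] [AddCommGroup H] [Fintype H]

/-- Averages are preserved by pulling back along a surjective homomorphism of finite groups. -/
lemma expect_comp_of_surjective (φ : G →+ H) (hφ : Function.Surjective φ) (g : H → ℝ) :
    𝔼 x, g (φ x) = 𝔼 y, g y := by
  classical
  have hfib : ∀ y, (Finset.univ.filter fun x => φ x = y).card
      = (Finset.univ.filter fun x => φ x = 0).card := fun y =>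
    AddMonoidHom.card_fiber_eq_of_mem_range φ (hφ y) (hφ 0)
  have hcard : Fintype.card G
      = Fintype.card H * (Finset.univ.filter fun x => φ x = 0).card := by
    rw [← Finset.card_univ, Finset.card_eq_sum_card_fiberwise (f := φ) (t := Finset.univ)
      (fun _ _ => Finset.mem_coe.2 (Finset.mem_univ _)), Finset.sum_congr rfl fun y _ => hfib y]
    simp
  have hsum : ∑ x, g (φ x) = (Finset.univ.filter fun x => φ x = 0).card * ∑ y, g y := by
    rw [← Finset.sum_fiberwise (s := Finset.univ) (g := φ), Finset.mul_sum]
    refine Finset.sum_congr rfl fun y _ => ?_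
    rw [← hfib y, ← nsmul_eq_mul, ← Finset.sum_const]
    exact Finset.sum_congr rfl fun x hx => by rw [(Finset.mem_filter.1 hx).2]
  have hG : (Fintype.card G : ℝ) ≠ 0 := by simp
  rw [Fintype.expect_eq_sum_div_card, Fintype.expect_eq_sum_div_card, hsum]
  rw [hcard] at hG ⊢
  push_cast at hG ⊢
  field_simp [left_ne_zero_of_mul hG, right_ne_zero_of_mul hG]

/-- The average of a function which is constant off the range of an endomorphism. -/
lemma expect_eq_of_const_off_range (φ : G →+ G) {r c : ℝ}
    (hr : (Nat.card φ.range : ℝ) / Nat.card G = r) (g : G → ℝ)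
    (hc : ∀ x, x ∉ φ.range → g x = c) :
    𝔼 x, g x = (1 - r) * c + r * 𝔼 y, g (φ y) := by
  classical
  have hrange : 𝔼 y, g (φ y) = 𝔼 z : φ.range, g z :=
    expect_comp_of_surjective φ.rangeRestrict φ.rangeRestrict_surjective fun z => g z
  have hsum : ∑ x, (g x - c) = ∑ z : φ.range, (g z - c) := by
    rw [← Finset.sum_filter_of_ne (p := fun x => x ∈ φ.range)]
    · exact Finset.sum_subtype _ (by simp) fun x => g x - c
    · intro x _ hx
      by_contra h
      exact hx (by rw [hc x h, sub_self])
  rw [hrange, Fintype.expect_eq_sum_div_card, Fintype.expect_eq_sum_div_card, ← hr,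
    Nat.card_eq_fintype_card, Nat.card_eq_fintype_card]
  have hG : (Fintype.card G : ℝ) ≠ 0 := by simp
  have hR : (Fintype.card φ.range : ℝ) ≠ 0 := by simp
  simp only [Finset.sum_sub_distrib, Finset.sum_const, Finset.card_univ, nsmul_eq_mul] at hsum
  field_simp
  linarith

end Averages

section Density

variable {R : Type*} [CommRing R]

/-- The proportion of multiples of `ϖ` in a finite ring. -/
noncomputable def multipleDensity (ϖ : R) : ℝ :=
  (Nat.card (DistribSMul.toAddMonoidHom R ϖ).range : ℝ) / Nat.card R

lemma density_smul_pi (ι : Type*) [Fintype ι] (ϖ : R) :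
    (Nat.card (DistribSMul.toAddMonoidHom (ι → R) ϖ).range : ℝ) / Nat.card (ι → R)
      = multipleDensity ϖ ^ Fintype.card ι := by
  have h : ((DistribSMul.toAddMonoidHom (ι → R) ϖ).range : Set (ι → R))
      = Set.univ.pi fun _ => ((DistribSMul.toAddMonoidHom R ϖ).range : Set R) := by
    ext v
    simp only [SetLike.mem_coe, AddMonoidHom.mem_range, Set.mem_univ_pi,
      DistribSMul.toAddMonoidHom_apply]
    constructor
    · rintro ⟨w, rfl⟩ i
      exact ⟨w i, rfl⟩
    · intro h
      choose w hw using h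
      exact ⟨w, funext hw⟩
  have hcard : Nat.card (DistribSMul.toAddMonoidHom (ι → R) ϖ).range
      = Nat.card (DistribSMul.toAddMonoidHom R ϖ).range ^ Fintype.card ι := by
    rw [← SetLike.coe_sort_coe, h, Nat.card_congr (Equiv.Set.univPi _), Nat.card_pi,
      Finset.prod_const, Finset.card_univ]
    rfl
  rw [hcard, Nat.card_fun, multipleDensity, Nat.card_eq_fintype_card (α := ι)]
  push_cast
  rw [div_pow]

end Density

section Symmetric

variable (ι κ α R : Type*) [CommRing R]

/-- The additive group of symmetric matrices. -/
def symmMatrices : AddSubgroup (Matrix ι ι R) where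
  carrier := {A | A.IsSymm}
  zero_mem' := Matrix.isSymm_zero
  add_mem' := Matrix.IsSymm.add
  neg_mem' := Matrix.IsSymm.neg

noncomputable instance [Finite ι] [Finite R] : Fintype (symmMatrices ι R) :=
  Fintype.ofFinite _

variable {ι κ α R}

/-- Reindexing of symmetric matrices. -/
def symmMatricesReindex (e : ι ≃ κ) : symmMatrices ι R ≃ symmMatrices κ R :=
  (Matrix.reindex e e).subtypeEquiv fun _ => (Matrix.isSymm_reindex_iff e).symm

/-- The matrix `B` bordered by a corner `a`, a row `v` and a column `w`. -/
def bordered (a : R) (v w : ι → R) (B : Matrix ι ι R) : Matrix (Unit ⊕ ι) (Unit ⊕ ι) R :=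
  Matrix.fromBlocks (Matrix.of fun _ _ => a) (Matrix.of fun _ j => v j)
    (Matrix.of fun i _ => w i) B

/-- A symmetric matrix is a symmetric matrix bordered by a corner and a vector. -/
def symmMatricesSum : R × (ι → R) × symmMatrices ι R ≃ symmMatrices (Unit ⊕ ι) R where
  toFun x := ⟨bordered x.1 x.2.1 x.2.1 x.2.2, by
    refine Matrix.IsSymm.fromBlocks ?_ ?_ x.2.2.2
    · ext; rfl
    · ext; rfl⟩
  invFun A := ⟨A.1 (.inl ()) (.inl ()), fun j => A.1 (.inl ()) (.inr j),
    A.1.submatrix Sum.inr Sum.inr, Matrix.IsSymm.submatrix A.2 _⟩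
  left_inv x := rfl
  right_inv A := by
    have hA : A.1.IsSymm := A.2
    refine Subtype.ext (Matrix.ext ?_)
    rintro (i | i) (j | j)
    · rfl
    · rfl
    · exact hA.apply _ _
    · rfl

lemma natCard_symmMatrices_fin (n : ℕ) :
    Nat.card (symmMatrices (Fin n) R) = Nat.card R ^ (n * (n + 1) / 2) := by
  induction n with
  | zero =>
    have : Subsingleton (symmMatrices (Fin 0) R) := ⟨fun A B => Subtype.ext (Subsingleton.elim _ _)⟩
    rw [Nat.card_of_subsingleton 0, zero_mul, Nat.zero_div, pow_zero]
  | succ n ih =>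
    have e : Fin (n + 1) ≃ Unit ⊕ Fin n := Fintype.equivOfCardEq (by simp [add_comm])
    have hexp : (n + 1) * (n + 1 + 1) / 2 = 1 + (n + n * (n + 1) / 2) := by
      rw [show (n + 1) * (n + 1 + 1) = n * (n + 1) + (n + 1) * 2 by ring,
        Nat.add_mul_div_right _ _ two_pos]
      ring
    rw [Nat.card_congr (symmMatricesReindex e), ← Nat.card_congr symmMatricesSum, Nat.card_prod,
      Nat.card_prod, ih, Nat.card_fun, Nat.card_fin, hexp, pow_add, pow_add, pow_one]

variable [Fintype ι] [DecidableEq ι] [Fintype α] [DecidableEq α]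

lemma det_bordered_mul_row (c a : R) (v w : ι → R) (B : Matrix ι ι R) :
    (bordered (c * a) (c • v) w B).det = c * (bordered a v w B).det := by
  have h := Matrix.det_mul_column (Sum.elim (fun _ => c) (fun _ => 1)) (bordered a v w B)
  simp only [Fintype.prod_sum_type, Sum.elim_inl, Sum.elim_inr, Finset.prod_const_one,
    Finset.univ_unique, Finset.prod_singleton, mul_one] at h
  rw [← h]
  congr 1
  ext (j | j) (l | l) <;> simp [bordered]

lemma det_bordered_mul_column (c a : R) (v w : ι → R) (B : Matrix ι ι R) :
    (bordered (c * a) v (c • w) B).det = c * (bordered a v w B).det := by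
  have h := Matrix.det_mul_row (Sum.elim (fun _ => c) (fun _ => 1)) (bordered a v w B)
  simp only [Fintype.prod_sum_type, Sum.elim_inl, Sum.elim_inr, Finset.prod_const_one,
    Finset.univ_unique, Finset.prod_singleton, mul_one] at h
  rw [← h]
  congr 1
  ext (j | j) (l | l) <;> simp [bordered]

lemma isSymm_mul_inv_mul (X : Matrix α α R) (hX : X.IsSymm) (Y : Matrix α κ R) (Z : Matrix κ α R)
    (hYZ : Yᵀ = Z) : (Z * X⁻¹ * Y).IsSymm := by
  rw [Matrix.IsSymm, Matrix.transpose_mul, Matrix.transpose_mul, Matrix.transpose_nonsing_inv,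
    hX.eq, ← hYZ, Matrix.transpose_transpose, Matrix.mul_assoc]

variable [Fintype κ] [DecidableEq κ] [Fintype R]

variable (ι) in
/-- The average of `f (det A)` over all symmetric matrices `A`. -/
noncomputable def detAverage (f : R → ℝ) : ℝ :=
  𝔼 A : symmMatrices ι R, f A.1.det

lemma detAverage_congr (e : ι ≃ κ) (f : R → ℝ) : detAverage ι f = detAverage κ f :=
  Fintype.expect_equiv (symmMatricesReindex e) _ _ fun A =>
    congrArg f (Matrix.det_reindex_self e A.1).symm

lemma expect_symmMatrices_sum (F : Matrix (Unit ⊕ ι) (Unit ⊕ ι) R → ℝ) :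
    𝔼 A : symmMatrices (Unit ⊕ ι) R, F A.1
      = 𝔼 a, 𝔼 v, 𝔼 B : symmMatrices ι R, F (bordered a v v B.1) := by
  rw [← Fintype.expect_equiv symmMatricesSum (fun x => F (bordered x.1 x.2.1 x.2.1 x.2.2.1)) _
    fun _ => rfl, ← Finset.univ_product_univ, Finset.expect_product]
  refine Finset.expect_congr rfl fun a _ => ?_
  rw [← Finset.univ_product_univ, Finset.expect_product]

/-- Averaging over the lower right block, when the upper left block is invertible. -/
lemma expect_det_fromBlocks {f : R → ℝ} (hf : ∀ u d, IsUnit u → f (u * d) = f d)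
    (X : Matrix α α R) (hX : IsUnit X.det) (Y : Matrix α κ R) (Z : Matrix κ α R)
    (hS : (Z * X⁻¹ * Y).IsSymm) :
    𝔼 C : symmMatrices κ R, f (Matrix.fromBlocks X Y Z C.1).det = detAverage κ f := by
  refine Fintype.expect_equiv (Equiv.subRight (⟨Z * X⁻¹ * Y, hS⟩ : symmMatrices κ R)) _ _
    fun C => ?_
  let := X.invertibleOfIsUnitDet hX
  rw [Matrix.det_fromBlocks₁₁, hf _ _ hX, Matrix.invOf_eq_nonsing_inv]
  rfl

/-- Averaging over the lower right block, when the corner is invertible and the column is a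
multiple of the row. -/
lemma expect_det_bordered_of_isUnit {f : R → ℝ} (hf : ∀ u d, IsUnit u → f (u * d) = f d)
    {a : R} (ha : IsUnit a) (v : ι → R) (c : R) :
    𝔼 B : symmMatrices ι R, f (bordered a v (c • v) B.1).det = detAverage ι f := by
  refine expect_det_fromBlocks hf _ (by simpa) _ _ ?_
  have h : (Matrix.of fun i (_ : Unit) => (c • v) i)
      = c • (Matrix.of fun i (_ : Unit) => v i) := rfl
  rw [h, Matrix.smul_mul, Matrix.smul_mul]
  refine (isSymm_mul_inv_mul _ ?_ _ _ ?_).smul c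
  · ext; rfl
  · ext; rfl

/-- Averaging over the lower right block, when the corner is not invertible but some entry of
the border is. -/
lemma expect_det_bordered_of_isUnit_apply {f : R → ℝ} (hf : ∀ u d, IsUnit u → f (u * d) = f d)
    {a : R} {v : ι → R} {i : ι} (hu : ∀ b, IsUnit (a * b - v i * v i))
    (e : ι ≃ Unit ⊕ κ) (he : e i = .inl ()) :
    𝔼 B : symmMatrices ι R, f (bordered a v v B.1).det = detAverage κ f := by
  set v' : Unit ⊕ κ → R := fun j => v (e.symm j)
  have hv' : v' (.inl ()) = v i := by simp [v', ← he]
  have hre : 𝔼 B : symmMatrices ι R, f (bordered a v v B.1).det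
      = 𝔼 B : symmMatrices (Unit ⊕ κ) R, f (bordered a v' v' B.1).det := by
    refine Fintype.expect_equiv (symmMatricesReindex e) _ _ fun B => ?_
    rw [← Matrix.det_reindex_self ((Equiv.refl Unit).sumCongr e)]
    congr 2
    ext (j | j) (l | l) <;> rfl
  rw [hre, expect_symmMatrices_sum (fun A => f (bordered a v' v' A).det)]
  have key : ∀ b w, 𝔼 C : symmMatrices κ R, f (bordered a v' v' (bordered b w w C.1)).det
      = detAverage κ f := by
    intro b w
    let X : Matrix (Unit ⊕ Unit) (Unit ⊕ Unit) R :=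
      bordered a (fun _ => v i) (fun _ => v i) (Matrix.of fun _ _ => b)
    let Y : Matrix (Unit ⊕ Unit) κ R :=
      Matrix.of (Sum.elim (fun _ j => v' (.inr j)) (fun _ j => w j))
    have hX : X.det = a * b - v i * v i := by
      rw [← Matrix.det_submatrix_equiv_self (finTwoEquiv.trans Equiv.boolEquivPUnitSumPUnit),
        Matrix.det_fin_two]
      rfl
    rw [← expect_det_fromBlocks hf X (hX ▸ hu b) Y Yᵀ (isSymm_mul_inv_mul X ?_ Y _ rfl)]
    · refine Finset.expect_congr rfl fun C _ => ?_
      rw [← Matrix.det_reindex_self (Equiv.sumAssoc Unit Unit κ)]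
      congr 2
      ext (j | j | j) (l | l | l) <;> first | rfl | exact hv'
    · ext (j | j) (l | l) <;> rfl
  simp only [key, Fintype.expect_const]

/-- The recurrence for averages over symmetric matrices over a finite local ring whose maximal
ideal is generated by `ϖ`. -/
lemma detAverage_succ {ϖ : R} (hϖ : ∀ a, ¬ IsUnit a ↔ ϖ ∣ a) {f : R → ℝ}
    (hf : ∀ u d, IsUnit u → f (u * d) = f d) {q : ℝ} (hq : multipleDensity ϖ = q) (n : ℕ) :
    detAverage (Fin (n + 1)) f = (1 - q) * detAverage (Fin n) f
      + q * ((1 - q ^ n) * detAverage (Fin (n - 1)) f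
      + q ^ n * ((1 - q) * detAverage (Fin n) (fun d => f (ϖ * d))
      + q * detAverage (Fin (n + 1)) fun d => f (ϖ * (ϖ * d)))) := by
  have hunit : ∀ a, a ∉ (DistribSMul.toAddMonoidHom R ϖ).range → IsUnit a := by
    intro a ha
    by_contra h
    obtain ⟨b, rfl⟩ := (hϖ a).1 h
    exact ha ⟨b, rfl⟩
  have hϖf : ∀ u d, IsUnit u → f (ϖ * (u * d)) = f (ϖ * d) := fun u d hu => by
    rw [mul_left_comm, hf _ _ hu]
  have hprim : ∀ (a : R) (v : Fin n → R),
      v ∉ (DistribSMul.toAddMonoidHom (Fin n → R) ϖ).range →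
      𝔼 B : symmMatrices (Fin n) R, f (bordered (ϖ * a) v v B.1).det
        = detAverage (Fin (n - 1)) f := by
    intro a v hv
    obtain ⟨i, hi⟩ : ∃ i, IsUnit (v i) := by
      by_contra! h
      choose w hw using fun i => (hϖ (v i)).1 (h i)
      exact hv ⟨w, funext fun i => (hw i).symm⟩
    obtain _ | m := n
    · exact i.elim0
    refine expect_det_bordered_of_isUnit_apply (i := i) hf (fun b => ?_)
      ((finSuccEquiv' i).trans ((Equiv.optionEquivSumPUnit _).trans (Equiv.sumComm _ _)))
      (by simp)
    by_contra h
    refine (hϖ (v i * v i)).2 ?_ (hi.mul hi)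
    rw [hϖ] at h
    have h' := dvd_sub (Dvd.intro (a * b) (mul_assoc ϖ a b).symm) h
    rwa [sub_sub_cancel] at h'
  have e : Fin (n + 1) ≃ Unit ⊕ Fin n := Fintype.equivOfCardEq (by simp [add_comm])
  rw [detAverage_congr e f, detAverage_congr e fun d => f (ϖ * (ϖ * d)),
    detAverage, expect_symmMatrices_sum (fun A => f A.det),
    expect_eq_of_const_off_range (DistribSMul.toAddMonoidHom R ϖ) hq
      (c := detAverage (Fin n) f) _ fun a ha => ?_]
  · congr 2
    have h₁ : ∀ a, 𝔼 v : Fin n → R, 𝔼 B : symmMatrices (Fin n) R,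
        f (bordered (ϖ * a) v v B.1).det
        = (1 - q ^ n) * detAverage (Fin (n - 1)) f + q ^ n * 𝔼 v : Fin n → R,
          𝔼 B : symmMatrices (Fin n) R, f (ϖ * (bordered a v (ϖ • v) B.1).det) := by
      intro a
      rw [expect_eq_of_const_off_range _ (density_smul_pi (Fin n) ϖ) _ (hprim a), hq,
        Fintype.card_fin]
      simp only [DistribSMul.toAddMonoidHom_apply, det_bordered_mul_row]
    simp only [DistribSMul.toAddMonoidHom_apply, smul_eq_mul, h₁, Finset.expect_add_distrib,
      Fintype.expect_const, ← Finset.mul_expect]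
    congr 2
    rw [expect_eq_of_const_off_range (DistribSMul.toAddMonoidHom R ϖ) hq
      (c := detAverage (Fin n) fun d => f (ϖ * d)) _ fun a ha => ?_]
    · simp only [DistribSMul.toAddMonoidHom_apply, smul_eq_mul, det_bordered_mul_column]
      congr 2
      exact (expect_symmMatrices_sum fun A => f (ϖ * (ϖ * A.det))).symm
    · simp only [expect_det_bordered_of_isUnit (ι := Fin n) (f := fun d => f (ϖ * d)) hϖf (hunit a ha),
        Fintype.expect_const]
  · have h := fun v : Fin n → R => expect_det_bordered_of_isUnit hf (hunit a ha) v 1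
    simp only [one_smul] at h
    simp only [h, Fintype.expect_const]

/-- Averages over symmetric matrices are compatible with reduction. -/
lemma detAverage_comp {S : Type*} [CommRing S] [Fintype S] (φ : R →+* S)
    (hφ : Function.Surjective φ) (f : S → ℝ) :
    detAverage ι (fun d => f (φ d)) = detAverage ι f := by
  let Φ : symmMatrices ι R →+ symmMatrices ι S :=
    { toFun A := ⟨φ.mapMatrix A.1, Matrix.IsSymm.map A.2 φ⟩
      map_zero' := Subtype.ext (map_zero φ.mapMatrix)
      map_add' A B := Subtype.ext (map_add φ.mapMatrix A.1 B.1) }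
  have hΦ : Function.Surjective Φ := by
    intro B
    have hB : B.1.IsSymm := B.2
    refine ⟨⟨Matrix.of fun i j => Function.surjInv hφ (B.1 i j), ?_⟩, ?_⟩
    · ext i j
      exact congrArg (Function.surjInv hφ) (hB.apply i j)
    · ext i j
      exact Function.surjInv_eq hφ _
  rw [detAverage, detAverage, ← expect_comp_of_surjective Φ hΦ]
  refine Finset.expect_congr rfl fun A _ => ?_
  rw [RingHom.map_det]
  rfl

end Symmetric

section ZMod

/-- The indicator function of the nonzero elements. -/
noncomputable def nonzeroIndicator {R : Type*} [CommRing R] (d : R) : ℝ :=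
  open Classical in if d = 0 then 0 else 1

lemma nonzeroIndicator_congr {R S : Type*} [CommRing R] [CommRing S] {d : R} {e : S}
    (h : d = 0 ↔ e = 0) : nonzeroIndicator d = nonzeroIndicator e := by
  classical
  simp only [nonzeroIndicator, h]

lemma Psym_eq_detAverage (n m : ℕ) [NeZero m] :
    Psym n m = detAverage (Fin n) (nonzeroIndicator : ZMod m → ℝ) := by
  classical
  rw [detAverage, Fintype.expect_eq_sum_div_card, ← Nat.card_eq_fintype_card,
    natCard_symmMatrices_fin, Nat.card_zmod, Psym, Nsym,
    ← Nat.card_congr (Equiv.subtypeSubtypeEquivSubtypeInter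
      (fun A : Matrix (Fin n) (Fin n) (ZMod m) => A.IsSymm) fun A => A.det ≠ 0)]
  push_cast
  congr 1
  have h : ∀ d : ZMod m, nonzeroIndicator d = if d ≠ 0 then (1 : ℝ) else 0 := fun d => by
    by_cases hd : d = 0 <;> simp [nonzeroIndicator, hd]
  simp only [h]
  rw [Finset.sum_boole, ← Fintype.card_subtype, ← Nat.card_eq_fintype_card]
  rfl

lemma Psym_one (n : ℕ) : Psym n 1 = 0 := by
  have h : Nsym n 1 = 0 :=
    Nat.card_eq_zero.2 (.inl ⟨fun A => A.2.2 (Subsingleton.elim _ _)⟩)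
  simp [Psym, h]

lemma Psym_zero {m : ℕ} (hm : m ≠ 1) : Psym 0 m = 1 := by
  have : Nontrivial (ZMod m) := ZMod.nontrivial_iff.2 hm
  have h : Nsym 0 m = 1 := by
    rw [Nsym, Nat.card_eq_one_iff_unique]
    exact ⟨⟨fun A B => Subtype.ext (Subsingleton.elim _ _)⟩,
      ⟨⟨0, Matrix.isSymm_zero, by simp⟩⟩⟩
  simp [Psym, h]

lemma abs_Psym_le_one (n m : ℕ) [NeZero m] : |Psym n m| ≤ 1 := by
  have h : ∀ d : ZMod m, 0 ≤ nonzeroIndicator d ∧ nonzeroIndicator d ≤ 1 := by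
    intro d
    unfold nonzeroIndicator
    split_ifs <;> simp
  rw [Psym_eq_detAverage, abs_le]
  refine ⟨neg_one_lt_zero.le.trans (Finset.expect_nonneg fun A _ => (h _).1),
    Finset.expect_le Finset.univ_nonempty fun A _ => (h _).2⟩

variable {p : ℕ}

lemma natCast_dvd_iff_castHom_eq_zero (ν : ℕ) (hp : p.Prime) (a : ZMod (p ^ (ν + 1))) :
    (p : ZMod (p ^ (ν + 1))) ∣ a ↔
      ZMod.castHom (dvd_pow_self p ν.succ_ne_zero) (ZMod p) a = 0 := by
  have : NeZero p := ⟨hp.ne_zero⟩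
  constructor
  · rintro ⟨b, rfl⟩
    simp
  · obtain ⟨k, rfl⟩ := ZMod.natCast_zmod_surjective a
    rw [map_natCast, ZMod.natCast_eq_zero_iff]
    exact Nat.cast_dvd_cast

lemma not_isUnit_iff_natCast_dvd (ν : ℕ) (hp : p.Prime) (a : ZMod (p ^ (ν + 1))) :
    ¬ IsUnit a ↔ (p : ZMod (p ^ (ν + 1))) ∣ a := by
  have : NeZero p := ⟨hp.ne_zero⟩
  rw [natCast_dvd_iff_castHom_eq_zero ν hp]
  obtain ⟨k, rfl⟩ := ZMod.natCast_zmod_surjective a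
  rw [map_natCast, ZMod.natCast_eq_zero_iff, ZMod.isUnit_iff_coprime,
    Nat.coprime_pow_right_iff ν.succ_pos, Nat.coprime_comm, hp.coprime_iff_not_dvd, not_not]

lemma multipleDensity_natCast (ν : ℕ) (hp : p.Prime) :
    multipleDensity (p : ZMod (p ^ (ν + 1))) = 1 / p := by
  have : NeZero p := ⟨hp.ne_zero⟩
  set φ : ZMod (p ^ (ν + 1)) →+ ZMod p :=
    (ZMod.castHom (dvd_pow_self p ν.succ_ne_zero) (ZMod p)).toAddMonoidHom
  have hφ : Function.Surjective φ := ZMod.castHom_surjective (dvd_pow_self p ν.succ_ne_zero)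
  have hker : (DistribSMul.toAddMonoidHom (ZMod (p ^ (ν + 1))) (p : ZMod (p ^ (ν + 1)))).range
      = φ.ker := by
    ext a
    refine Iff.trans ?_ (natCast_dvd_iff_castHom_eq_zero ν hp a)
    exact ⟨fun ⟨b, hb⟩ => ⟨b, hb.symm⟩, fun ⟨b, hb⟩ => ⟨b, hb.symm⟩⟩
  have hcard := φ.ker.card_mul_index
  rw [AddSubgroup.index_ker, AddMonoidHom.range_eq_top.2 hφ, AddSubgroup.card_top,
    Nat.card_zmod] at hcard
  have h0 : (Nat.card φ.ker : ℝ) ≠ 0 := Nat.cast_ne_zero.2 Nat.card_pos.ne'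
  have hp0 : (p : ℝ) ≠ 0 := by exact_mod_cast hp.ne_zero
  rw [multipleDensity, hker, ← hcard]
  push_cast
  field_simp

lemma detAverage_natCast_pow_mul (hp : p.Prime) (n ν j : ℕ) [NeZero (p ^ (ν + j))] :
    detAverage (Fin n) (fun d : ZMod (p ^ (ν + j)) => nonzeroIndicator ((p : ZMod _) ^ j * d))
      = Psym n (p ^ ν) := by
  have : NeZero p := ⟨hp.ne_zero⟩
  rw [Psym_eq_detAverage, ← detAverage_comp
    (ZMod.castHom (pow_dvd_pow p (Nat.le_add_right ν j)) (ZMod (p ^ ν)))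
    (ZMod.castHom_surjective _)]
  congr 1
  ext d
  refine nonzeroIndicator_congr ?_
  obtain ⟨k, rfl⟩ := ZMod.natCast_zmod_surjective d
  rw [map_natCast, ZMod.natCast_eq_zero_iff, ← Nat.cast_pow, ← Nat.cast_mul,
    ZMod.natCast_eq_zero_iff, pow_add, mul_comm,
    Nat.mul_dvd_mul_iff_left (pow_pos hp.pos j)]

/-- The two-step recurrence for the proportions `Psym n (p ^ μ)`. -/
lemma Psym_succ (hp : p.Prime) {q : ℝ} (hq : q = 1 / p) (n ν : ℕ) :
    Psym (n + 1) (p ^ (ν + 1)) = (1 - q) * Psym n (p ^ (ν + 1))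
      + q * ((1 - q ^ n) * Psym (n - 1) (p ^ (ν + 1))
      + q ^ n * ((1 - q) * Psym n (p ^ ν) + q * Psym (n + 1) (p ^ (ν - 1)))) := by
  have : NeZero p := ⟨hp.ne_zero⟩
  rw [Psym_eq_detAverage, detAverage_succ (not_isUnit_iff_natCast_dvd ν hp)
    (fun u d hu => nonzeroIndicator_congr hu.mul_right_eq_zero)
    ((multipleDensity_natCast ν hp).trans hq.symm) n,
    ← Psym_eq_detAverage, ← Psym_eq_detAverage]
  have h₁ := detAverage_natCast_pow_mul hp n ν 1
  simp only [pow_one] at h₁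
  rw [h₁]
  congr 5
  refine congrArg (q * ·) ?_
  obtain _ | ν := ν
  · rw [pow_zero, Psym_one]
    refine Finset.expect_eq_zero fun A _ => ?_
    have h : (p : ZMod (p ^ (0 + 1))) = 0 := by
      rw [ZMod.natCast_eq_zero_iff, zero_add, pow_one]
    simp [nonzeroIndicator, h]
  · have h₂ := detAverage_natCast_pow_mul hp (n + 1) ν 2
    simp only [pow_two, mul_assoc] at h₂
    exact h₂

end ZMod

section GeneratingFunction

variable {p : ℕ} {q x : ℝ}

/-- The generating function of the proportions `Psym n (p ^ μ)`, `μ ≥ 1`. -/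
noncomputable def PsymSeries (p n : ℕ) (x : ℝ) : ℝ :=
  ∑' ν : ℕ, Psym n (p ^ (ν + 1)) * x ^ (ν + 1)

lemma hasSum_PsymSeries (hp : p.Prime) (hx : |x| < 1) (n : ℕ) :
    HasSum (fun ν : ℕ => Psym n (p ^ (ν + 1)) * x ^ (ν + 1)) (PsymSeries p n x) := by
  have : NeZero p := ⟨hp.ne_zero⟩
  refine Summable.hasSum (Summable.of_norm_bounded
    ((summable_nat_add_iff 1).2 (summable_geometric_of_lt_one (abs_nonneg x) hx)) fun ν => ?_)
  rw [Real.norm_eq_abs, abs_mul, abs_pow]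
  exact mul_le_of_le_one_left (by positivity) (abs_Psym_le_one _ _)

lemma PsymSeries_zero (hp : p.Prime) (hx : |x| < 1) : PsymSeries p 0 x = x / (1 - x) := by
  have h := (hasSum_geometric_of_abs_lt_one hx).mul_left x
  rw [← div_eq_mul_inv] at h
  refine ((hasSum_PsymSeries hp hx 0).unique ?_)
  refine h.congr_fun fun ν => ?_
  rw [Psym_zero (Nat.one_lt_pow ν.succ_ne_zero hp.one_lt).ne', one_mul, pow_succ']

lemma PsymSeries_succ (hp : p.Prime) (hq : q = 1 / p) (hx : |x| < 1) (n : ℕ) :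
    PsymSeries p (n + 1) x * (1 - q ^ (n + 2) * x ^ 2)
      = (1 - q) * (1 + q ^ (n + 1) * x) * PsymSeries p n x
        + q * (1 - q ^ n) * PsymSeries p (n - 1) x := by
  have h := hasSum_PsymSeries hp hx
  have h₁ : ∀ n, HasSum (fun ν : ℕ => Psym n (p ^ ν) * x ^ (ν + 1)) (x * PsymSeries p n x) := by
    intro n
    rw [← hasSum_nat_add_iff' 1, Finset.sum_range_one, pow_zero, Psym_one, zero_mul, sub_zero]
    exact ((h n).mul_left x).congr_fun fun ν => by ring
  have h₂ : ∀ n, HasSum (fun ν : ℕ => Psym n (p ^ (ν - 1)) * x ^ (ν + 1))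
      (x ^ 2 * PsymSeries p n x) := by
    intro n
    rw [← hasSum_nat_add_iff' 1, Finset.sum_range_one, Nat.zero_sub, pow_zero, Psym_one,
      zero_mul, sub_zero, pow_two, mul_assoc]
    exact ((h₁ n).mul_left x).congr_fun fun ν => by
      rw [Nat.add_sub_cancel]
      ring
  have key := ((h n).mul_left (1 - q)).add ((((h (n - 1)).mul_left (1 - q ^ n)).add
    ((((h₁ n).mul_left (1 - q)).add ((h₂ (n + 1)).mul_left q)).mul_left (q ^ n))).mul_left q)
  have huniq := (h (n + 1)).unique (key.congr_fun fun ν => by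
    rw [Psym_succ hp hq]
    ring)
  linear_combination huniq

lemma one_sub_pow_mul_ne_zero (hp : p.Prime) (hq : q = 1 / p) {y : ℝ} (hy : |y| < 1) (n : ℕ) :
    1 - q ^ n * y ≠ 0 := by
  have hq0 : 0 ≤ q := by rw [hq]; positivity
  have hq1 : q ≤ 1 := by
    rw [hq, div_le_one (by exact_mod_cast hp.pos)]
    exact_mod_cast hp.one_le
  have h : |q ^ n * y| < 1 := by
    rw [abs_mul, abs_of_nonneg (pow_nonneg hq0 n)]
    exact (mul_le_of_le_one_left (abs_nonneg y) (pow_le_one₀ hq0 hq1)).trans_lt hy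
  exact (sub_pos.2 (abs_lt.1 h).2).ne'

lemma PsymSeries_succ_of_eq (hp : p.Prime) (hq : q = 1 / p) (hx : |x| < 1) {n : ℕ}
    (h : (1 - q ^ n) * (PsymSeries p n x * (1 - q ^ (n + 1) * x ^ 2))
      = (1 - q ^ n) * (PsymSeries p (n - 1) x * (1 - q ^ (n + 1) * x))) :
    PsymSeries p (n + 1) x * (1 - q ^ (n + 1) * x)
      = PsymSeries p n x * (1 - q ^ (n + 1)) := by
  have hx2 : |x ^ 2| < 1 := by
    rw [abs_pow]
    exact pow_lt_one₀ (abs_nonneg x) hx two_ne_zero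
  refine mul_right_cancel₀ (one_sub_pow_mul_ne_zero hp hq hx2 (n + 2)) ?_
  linear_combination (1 - q ^ (n + 1) * x) * PsymSeries_succ hp hq hx n - q * h

/-- The ratios of consecutive generating functions. -/
lemma PsymSeries_ratios (hp : p.Prime) (hq : q = 1 / p) (hx : |x| < 1) (k : ℕ) :
    PsymSeries p (2 * k + 1) x * (1 - q ^ (2 * k + 1) * x)
        = PsymSeries p (2 * k) x * (1 - q ^ (2 * k + 1)) ∧
      PsymSeries p (2 * k + 2) x * (1 - q ^ (2 * k + 3) * x ^ 2)
        = PsymSeries p (2 * k + 1) x * (1 - q ^ (2 * k + 3) * x) := by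
  have heven : ∀ k, PsymSeries p (2 * k + 1) x * (1 - q ^ (2 * k + 1) * x)
        = PsymSeries p (2 * k) x * (1 - q ^ (2 * k + 1)) →
      PsymSeries p (2 * k + 2) x * (1 - q ^ (2 * k + 3) * x ^ 2)
        = PsymSeries p (2 * k + 1) x * (1 - q ^ (2 * k + 3) * x) := by
    intro k h
    have hrec := PsymSeries_succ hp hq hx (2 * k + 1)
    rw [Nat.add_sub_cancel] at hrec
    linear_combination hrec - q * h
  induction k with
  | zero =>
    have h := PsymSeries_succ_of_eq hp hq hx (n := 0) (by simp)
    exact ⟨h, heven 0 h⟩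
  | succ k ih =>
    have h := PsymSeries_succ_of_eq hp hq hx (n := 2 * (k + 1)) (congrArg _ ih.2)
    exact ⟨h, heven (k + 1) h⟩

end GeneratingFunction

theorem Psym_generating_function_odd (p : ℕ) (hp : p.Prime) (q : ℝ)
    (hq : q = 1 / p) (k : ℕ) (x : ℝ) (hx : |x| < 1) :
    HasSum (fun μ : ℕ => Psym (2 * k + 1) (p ^ (μ + 1)) * x ^ (μ + 1))
      ((x / (1 - x)) * ((1 - q * x ^ 2) / (1 - q * x)) *
        ∏ j ∈ Finset.range (k + 1),
          (1 - q ^ (2 * j + 1)) / (1 - q ^ (2 * j + 1) * x ^ 2)) := by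
  have hx2 : |x ^ 2| < 1 := by
    rw [abs_pow]
    exact pow_lt_one₀ (abs_nonneg x) hx two_ne_zero
  have h1 : 1 - q * x ≠ 0 := by simpa using one_sub_pow_mul_ne_zero hp hq hx 1
  have h2 : 1 - q * x ^ 2 ≠ 0 := by simpa using one_sub_pow_mul_ne_zero hp hq hx2 1
  convert hasSum_PsymSeries hp hx (2 * k + 1) using 1
  induction k with
  | zero =>
    have h := (PsymSeries_ratios hp hq hx 0).1
    simp only [mul_zero, zero_add, pow_one, PsymSeries_zero hp hx] at h
    rw [Finset.prod_range_one, mul_zero, zero_add, eq_div_of_mul_eq h1 h, pow_one, mul_assoc, div_mul_div_comm,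
      mul_comm (1 - q * x), mul_div_mul_left _ _ h2, mul_div_assoc]
  | succ k ih =>
    have h3 := one_sub_pow_mul_ne_zero hp hq hx (2 * k + 3)
    have h4 := one_sub_pow_mul_ne_zero hp hq hx2 (2 * k + 3)
    have hodd := (PsymSeries_ratios hp hq hx (k + 1)).1
    have heven := (PsymSeries_ratios hp hq hx k).2
    rw [Finset.prod_range_succ, ← mul_assoc, ih]
    refine mul_right_cancel₀ h3 (mul_right_cancel₀ h4 ?_)
    have hdiv : (1 - q ^ (2 * (k + 1) + 1)) / (1 - q ^ (2 * (k + 1) + 1) * x ^ 2)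
        * (1 - q ^ (2 * k + 3) * x ^ 2) = 1 - q ^ (2 * k + 3) := div_mul_cancel₀ _ h4
    linear_combination PsymSeries p (2 * k + 1) x * (1 - q ^ (2 * k + 3) * x) * hdiv
      - (1 - q ^ (2 * k + 3) * x ^ 2) * hodd - (1 - q ^ (2 * k + 3)) * heven
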